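/- Closing arbitrary views under congruence (Lemma 'ssd-rewriting-union-of-cc'): Let A be an NFA over β with finitely many states, let L_s be a language over α ⊕ β, and let V : α → Language β be views capturing ⟨L_s, L(A)⟩. Define V' : α → Language β by V'(a) = ⋃_{w ∈ V(a)} [w]_A (so V'(a) = ∅ when V(a) = ∅). Then V' captures ⟨L_s, L(A)⟩. -/

import Mathlib

/-!
Words with the same transition relation move every set of states of `A` to the same set of states,
so congruence of words is compatible with concatenation and with acceptance. By induction on `s`,
every word of `s[V']` is therefore congruent to some word of `s[V]`
(`exists_congr_mem_subst`); the latter is accepted, hence so is the former. Nonemptiness is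
inherited because `V a ⊆ V' a` for all `a` and substitution is monotone (`subst_mono`).
-/

/-- Substituted letter: a source letter is replaced by its view, a target letter by itself. -/
def viewHat {α β : Type*} (V : α → Language β) : α ⊕ β → Language β
  | Sum.inl a => V a
  | Sum.inr b => {[b]}

/-- Substitution `s[V]` of views into a word over the combined alphabet. -/
def subst {α β : Type*} (V : α → Language β) (s : List (α ⊕ β)) : Language β :=
  (s.map (viewHat V)).prod

/-- Substitution `L_s[V]` of views into a source language. -/
def langSubst {α β : Type*} (V : α → Language β) (Ls : Language (α ⊕ β)) : Language β :=
  ⋃ s ∈ Ls, subst V s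

/-- Views `V` capture the mapping `⟨L_s, L_t⟩`. -/
def Captures {α β : Type*} (V : α → Language β) (Ls : Language (α ⊕ β))
    (Lt : Language β) : Prop :=
  langSubst V Ls ≤ Lt ∧ langSubst V Ls ≠ 0

/-- The transition relation of the word `w` on the NFA `A`. -/
def transRel {β σ : Type*} (A : NFA β σ) (w : List β) : Set (σ × σ) :=
  {pq | pq.2 ∈ A.evalFrom {pq.1} w}

/-- The congruence class of the word `w` for the NFA `A`. -/
def congClass {β σ : Type*} (A : NFA β σ) (w : List β) : Language β :=
  {w' | transRel A w' = transRel A w}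

theorem mem_langSubst {α β : Type*} {V : α → Language β} {Ls : Language (α ⊕ β)} {w : List β} :
    w ∈ langSubst V Ls ↔ ∃ s ∈ Ls, w ∈ subst V s := by
  unfold langSubst
  exact Set.mem_iUnion₂.trans (by simp only [exists_prop]; rfl)

theorem mem_iUnion_congClass {β σ : Type*} {A : NFA β σ} {L : Language β} {w' : List β} :
    w' ∈ (⋃ w ∈ L, congClass A w : Language β) ↔ ∃ w ∈ L, transRel A w' = transRel A w :=
  Set.mem_iUnion₂.trans (by simp only [exists_prop]; rfl)

theorem evalFrom_eq_of_transRel_eq {β σ : Type*} {A : NFA β σ} {u v : List β}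
    (h : transRel A u = transRel A v) (S : Set σ) : A.evalFrom S u = A.evalFrom S v := by
  ext q
  rw [A.mem_evalFrom_iff_exists, A.mem_evalFrom_iff_exists (x := v)]
  exact exists_congr fun p => and_congr_right fun _ => Set.ext_iff.mp h (p, q)

theorem transRel_append_congr {β σ : Type*} {A : NFA β σ} {u u' v v' : List β}
    (hu : transRel A u = transRel A u') (hv : transRel A v = transRel A v') :
    transRel A (u ++ v) = transRel A (u' ++ v') := by
  ext ⟨p, q⟩
  simp only [transRel, Set.mem_ofPred_eq, NFA.evalFrom_append]
  rw [evalFrom_eq_of_transRel_eq hu, evalFrom_eq_of_transRel_eq hv]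

theorem subst_mono {α β : Type*} {V W : α → Language β} (h : ∀ a, V a ≤ W a)
    (s : List (α ⊕ β)) : subst V s ≤ subst W s := by
  induction s with
  | nil => exact le_rfl
  | cons c s ih =>
    simp only [subst, List.map_cons, List.prod_cons] at ih ⊢
    refine mul_le_mul' ?_ ih
    cases c with
    | inl a => exact h a
    | inr b => exact le_rfl

theorem exists_congr_mem_subst {α β σ : Type*} (A : NFA β σ) (V : α → Language β)
    (s : List (α ⊕ β)) (w' : List β)
    (hw' : w' ∈ subst (fun a => ⋃ w ∈ V a, congClass A w) s) :
    ∃ w ∈ subst V s, transRel A w' = transRel A w := by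
  induction s generalizing w' with
  | nil => exact ⟨w', hw', rfl⟩
  | cons c s ih =>
    simp only [subst, List.map_cons, List.prod_cons] at ih hw' ⊢
    obtain ⟨u', hu', v', hv', rfl⟩ := Language.mem_mul.mp hw'
    obtain ⟨v, hv, hvv⟩ := ih v' hv'
    obtain ⟨u, hu, huu⟩ : ∃ u ∈ viewHat V c, transRel A u' = transRel A u := by
      cases c with
      | inl a => exact mem_iUnion_congClass.mp hu'
      | inr b => exact ⟨u', hu', rfl⟩
    exact ⟨u ++ v, Language.append_mem_mul hu hv, transRel_append_congr huu hvv⟩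

/-- Lemma "ssd-rewriting-union-of-cc": if views `V` capture `⟨L_s, L(A)⟩` for an NFA `A`
with finitely many states, then the views `V'` obtained by closing each `V a` under
congruence for `A` (i.e., `V' a = ⋃ w ∈ V a, [w]_A`) also capture `⟨L_s, L(A)⟩`. -/
theorem ssd_rewriting_union_of_cc {α β σ : Type*} [Fintype σ] (A : NFA β σ)
    (Ls : Language (α ⊕ β)) (V : α → Language β)
    (hV : Captures V Ls A.accepts) :
    Captures (fun a => ⋃ w ∈ V a, congClass A w) Ls A.accepts := by
  obtain ⟨hsub, hne⟩ := hV
  constructor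
  · intro w' hw'
    obtain ⟨s, hs, hw's⟩ := mem_langSubst.mp hw'
    obtain ⟨w, hw, hcongr⟩ := exists_congr_mem_subst A V s w' hw's
    have hacc : w ∈ A.accepts := hsub (mem_langSubst.mpr ⟨s, hs, hw⟩)
    rw [NFA.mem_accepts] at hacc
    refine A.mem_accepts.mpr ?_
    rwa [evalFrom_eq_of_transRel_eq hcongr]
  · obtain ⟨w, hw⟩ : (langSubst V Ls : Set (List β)).Nonempty := Set.nonempty_iff_ne_empty.mpr hne
    obtain ⟨s, hs, hws⟩ := mem_langSubst.mp hw
    have hle : ∀ a, V a ≤ (⋃ w ∈ V a, congClass A w : Language β) :=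
      fun a u hu => mem_iUnion_congClass.mpr ⟨u, hu, rfl⟩
    exact Set.nonempty_iff_ne_empty.mp ⟨w, mem_langSubst.mpr ⟨s, hs, subst_mono hle s hws⟩⟩
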